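/- Let V be a finite set with distinct s, t ∈ V, and let c_λ : V × V → ℝ, λ ∈ ℝ, be parametric nonnegative capacities such that λ ↦ c_λ(s, v) is nondecreasing for every v, λ ↦ c_λ(v, t) is nonincreasing for every v, and c_λ(u, v) is constant in λ whenever u ≠ s and v ≠ t. Let λ₁ ≤ λ₂, and for i = 1, 2 let S_{λᵢ} be the unique minimal minimum s,t-cut with respect to capacities c_{λᵢ} (the minimum s,t-cut contained in every minimum s,t-cut of c_{λᵢ}). Then S_{λ₁} ⊆ S_{λ₂}. -/

import Mathlib

/-!
The cut function is submodular, and this persists when the two sets are measured with different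
parameters: for cuts `S`, `T` and `λ₁ ≤ λ₂`,
`c_{λ₁}⁺(S ∩ T) + c_{λ₂}⁺(S ∪ T) ≤ c_{λ₁}⁺(S) + c_{λ₂}⁺(T)`
(`cutVal_inter_add_cutVal_union_le`). Indeed, this holds edge by edge: passing to `∩`, `∪` replaces
`c_{λ₂}` by `c_{λ₁}` only on edges with head in `S \ T`, hence not `t`, and `c_{λ₁}` by `c_{λ₂}`
only on edges with tail in `S \ T`, hence not `s`; otherwise terms are kept or dropped.
For `S = S_{λ₁}`, `T = S_{λ₂}`, minimality of
`S_{λ₂}` against the union gives that `S_{λ₁} ∩ S_{λ₂}` is a minimum cut for `λ₁`, so it contains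
the minimal one.
-/

/-- The cut value of a set `S` for capacities `c`: `c⁺(S) = Σ_{u ∈ S, v ∉ S} c u v`. -/
def cutVal {V : Type*} [Fintype V] [DecidableEq V] (c : V → V → ℝ) (S : Finset V) : ℝ :=
  ∑ u ∈ S, ∑ v ∈ Sᶜ, c u v

/-- `S` is a minimum `s,t`-cut for capacities `c`. -/
def IsMinCut {V : Type*} [Fintype V] [DecidableEq V] (s t : V) (c : V → V → ℝ)
    (S : Finset V) : Prop :=
  s ∈ S ∧ t ∉ S ∧ ∀ S' : Finset V, s ∈ S' → t ∉ S' → cutVal c S ≤ cutVal c S'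

/-- `S` is the minimal minimum `s,t`-cut for capacities `c`: a minimum cut contained in
every minimum cut. -/
def IsMinimalMinCut {V : Type*} [Fintype V] [DecidableEq V] (s t : V) (c : V → V → ℝ)
    (S : Finset V) : Prop :=
  IsMinCut s t c S ∧ ∀ S' : Finset V, IsMinCut s t c S' → S ⊆ S'

/-- The cut value as a sum over all ordered pairs, so that cut values of different sets can be
compared term by term. -/
lemma cutVal_eq_sum_ite {V : Type*} [Fintype V] [DecidableEq V] (c : V → V → ℝ)
    (S : Finset V) :
    cutVal c S = ∑ u, ∑ v, if u ∈ S ∧ v ∉ S then c u v else 0 := by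
  unfold cutVal
  rw [← Finset.sum_filter_add_sum_filter_not Finset.univ (fun u => u ∈ S)]
  have hzero : ∑ u with u ∉ S, ∑ v, (if u ∈ S ∧ v ∉ S then c u v else 0) = 0 := by
    refine Finset.sum_eq_zero fun u hu => Finset.sum_eq_zero fun v _ => ?_
    simp only [Finset.mem_filter] at hu
    simp [hu.2]
  rw [hzero, add_zero, Finset.filter_univ_mem]
  refine Finset.sum_congr rfl fun u hu => ?_
  rw [← Finset.sum_filter]
  refine Finset.sum_congr ?_ fun _ _ => rfl
  ext v
  simp [hu]

/-- Submodularity of the cut function across two capacity functions: `a` for the smaller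
parameter and `b` for the larger one. -/
lemma cutVal_inter_add_cutVal_union_le {V : Type*} [Fintype V] [DecidableEq V] {s t : V}
    {a b : V → V → ℝ} (ha : ∀ u v, 0 ≤ a u v) (hb : ∀ u v, 0 ≤ b u v)
    (hs : ∀ v, a s v ≤ b s v) (ht : ∀ v, b v t ≤ a v t)
    (hab : ∀ u v, u ≠ s → v ≠ t → a u v = b u v) {S T : Finset V}
    (hsT : s ∈ T) (htS : t ∉ S) :
    cutVal a (S ∩ T) + cutVal b (S ∪ T) ≤ cutVal a S + cutVal b T := by
  simp only [cutVal_eq_sum_ite, ← Finset.sum_add_distrib]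
  refine Finset.sum_le_sum fun u _ => Finset.sum_le_sum fun v _ => ?_
  have h1 := ha u v
  have h2 := hb u v
  -- Beyond nonnegativity, the only inequalities needed are `a u v ≤ b u v` when `u ∈ S ∩ T` and
  -- `v ∈ S \ T` (so `v ≠ t`), and `b u v ≤ a u v` when `u ∈ S \ T` (so `u ≠ s`) and `v ∉ S ∪ T`.
  have h3 : v ≠ t → a u v ≤ b u v := by
    intro hv
    by_cases hu : u = s
    · exact hu ▸ hs v
    · exact (hab u v hu hv).le
  have h4 : u ≠ s → b u v ≤ a u v := by
    intro hu
    by_cases hv : v = t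
    · exact hv ▸ ht u
    · exact (hab u v hu hv).ge
  have h5 : v ∈ S → v ≠ t := fun h e => htS (e ▸ h)
  have h6 : u ∉ T → u ≠ s := fun h e => h (e ▸ hsT)
  simp only [Finset.mem_inter, Finset.mem_union]
  by_cases uS : u ∈ S <;> by_cases uT : u ∈ T <;> by_cases vS : v ∈ S <;>
    by_cases vT : v ∈ T <;> simp_all

/-- For parametric nonnegative capacities (nondecreasing on edges out of `s`,
nonincreasing on edges into `t`, constant otherwise), if `λ₁ ≤ λ₂` and `S_{λᵢ}` is the
minimal minimum `s,t`-cut for `c_{λᵢ}`, then `S_{λ₁} ⊆ S_{λ₂}`. -/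
theorem stmt13 {V : Type*} [DecidableEq V] [Fintype V]
    (s t : V) (hst : s ≠ t)
    (c : ℝ → V → V → ℝ)
    (hnn : ∀ (lam : ℝ) (u v : V), 0 ≤ c lam u v)
    (hmono : ∀ v : V, Monotone fun lam => c lam s v)
    (hanti : ∀ v : V, Antitone fun lam => c lam v t)
    (hconst : ∀ u v : V, u ≠ s → v ≠ t → ∀ lam lam' : ℝ, c lam u v = c lam' u v)
    (lam1 lam2 : ℝ) (h12 : lam1 ≤ lam2)
    (S1 S2 : Finset V)
    (h1 : IsMinimalMinCut s t (c lam1) S1) (h2 : IsMinimalMinCut s t (c lam2) S2) :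
    S1 ⊆ S2 := by
  obtain ⟨⟨hs1, ht1, hmin1⟩, hleast1⟩ := h1
  obtain ⟨⟨hs2, ht2, hmin2⟩, -⟩ := h2
  have hsub := cutVal_inter_add_cutVal_union_le (hnn lam1) (hnn lam2)
    (fun v => hmono v h12) (fun v => hanti v h12)
    (fun u v hu hv => hconst u v hu hv lam1 lam2) hs2 ht1
  have hunion := hmin2 (S1 ∪ S2) (Finset.mem_union_left _ hs1) (by simp [ht1, ht2])
  have hinter : IsMinCut s t (c lam1) (S1 ∩ S2) := by
    refine ⟨Finset.mem_inter.2 ⟨hs1, hs2⟩, by simp [ht1], fun S' hs' ht' => ?_⟩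
    have := hmin1 S' hs' ht'
    linarith
  exact (hleast1 _ hinter).trans Finset.inter_subset_right
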